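/- Let n ≥ 1, d ≥ 2, P ∈ Δ_d, and let N_1, …, N_d be the class counts of an i.i.d. sample X_1, …, X_n from P. For λ ≥ 1 define R_λ = Σ_{j=1}^d (2n p_j²/λ) · 1{N_j ≤ n p_j/4}. Then: (i) for any δ ∈ (e^{-n/6}, e^{-2}), the probability that R_1 ≥ (33550 d + 33550 log²(1/δ))/n is at most 2δ; and (ii) for any δ ∈ (e^{-n/6}, e^{-√d}], taking λ = log(1/δ)/√d, the probability that R_λ ≥ 91190 √d log(1/δ)/n is at most 2δ. -/

import Mathlib

open Finset

/-- Probability of an event `E` under an i.i.d. sample of size `n` from the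
distribution `p` on `{1, …, d}`. -/
noncomputable def sampleProb {n d : ℕ} (p : Fin d → ℝ) (E : Set (Fin n → Fin d)) : ℝ :=
  ∑ x : Fin n → Fin d, Set.indicator E (fun y => ∏ i, p (y i)) x

/-- Count of class `j` in the sample `x`. -/
def count {n d : ℕ} (x : Fin n → Fin d) (j : Fin d) : ℕ :=
  (Finset.univ.filter (fun i => x i = j)).card

/-- The residualTerm term `R_λ = Σ_j (2 n p_j² / λ) · 1{N_j ≤ n p_j / 4}`. -/
noncomputable def residualTerm {n d : ℕ} (p : Fin d → ℝ) (lam : ℝ) (x : Fin n → Fin d) : ℝ :=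
  ∑ j, (2 * n * p j ^ 2 / lam) * (if (count x j : ℝ) ≤ n * p j / 4 then 1 else 0)

noncomputable def lowInd {n d : ℕ} (p : Fin d → ℝ) (x : Fin n → Fin d) (j : Fin d) : ℝ :=
  if (count x j : ℝ) ≤ n * p j / 4 then 1 else 0

lemma lowInd_nonneg {n d : ℕ} (p : Fin d → ℝ) (x : Fin n → Fin d) (j : Fin d) :
    0 ≤ lowInd p x j := by
  unfold lowInd; split_ifs <;> norm_num

lemma lowInd_le {n d : ℕ} (p : Fin d → ℝ) (x : Fin n → Fin d) (j : Fin d) :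
    lowInd p x j ≤ Real.exp (n * p j / 4 - count x j) := by
  unfold lowInd
  split_ifs with h
  · exact Real.one_le_exp (by linarith)
  · positivity

lemma subset_bound {n d : ℕ} (p : Fin d → ℝ) (hp0 : ∀ j, 0 ≤ p j) (hp1 : ∑ j, p j = 1)
    (S : Finset (Fin d)) :
    ∑ x : Fin n → Fin d, (∏ i, p (x i)) * ∏ j ∈ S, lowInd p x j
      ≤ ∏ j ∈ S, Real.exp (-(n * p j / 4)) := by
  have hcount : ∀ x : Fin n → Fin d, ∑ j ∈ S, (count x j : ℝ) = ∑ i, if x i ∈ S then (1:ℝ) else 0 := by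
    intro x
    have : ∀ j, (count x j : ℝ) = ∑ i, if x i = j then (1:ℝ) else 0 := by
      intro j; simp [count]
    simp_rw [this]
    rw [Finset.sum_comm]
    apply Finset.sum_congr rfl
    intro i _
    simp
  have h1 : ∀ x : Fin n → Fin d, (∏ i, p (x i)) * ∏ j ∈ S, lowInd p x j ≤
      Real.exp (∑ j ∈ S, n * p j / 4) *
        ∏ i, (p (x i) * Real.exp (-(if x i ∈ S then (1:ℝ) else 0))) := by
    intro x
    have hw : 0 ≤ ∏ i, p (x i) := Finset.prod_nonneg fun i _ => hp0 _
    calc _ ≤ (∏ i, p (x i)) * ∏ j ∈ S, Real.exp (n * p j / 4 - count x j) := by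
          apply mul_le_mul_of_nonneg_left _ hw
          exact Finset.prod_le_prod (fun j _ => lowInd_nonneg p x j) (fun j _ => lowInd_le p x j)
      _ = _ := by
          rw [Finset.prod_mul_distrib, ← Real.exp_sum, ← Real.exp_sum, Finset.sum_sub_distrib,
            hcount, sub_eq_add_neg, Real.exp_add, Finset.sum_neg_distrib]
          ring
  refine (Finset.sum_le_sum fun x _ => h1 x).trans ?_
  rw [← Finset.mul_sum, ← Fintype.sum_pow (fun k => p k * Real.exp (-(if k ∈ S then (1:ℝ) else 0))),
    ← Real.exp_sum]
  have h2 : ∑ k, p k * Real.exp (-(if k ∈ S then (1:ℝ) else 0)) ≤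
      Real.exp (-(1/2 * ∑ j ∈ S, p j)) := by
    have he : Real.exp (-1) ≤ 1/2 := by
      have := Real.exp_neg_one_lt_d9
      linarith
    have : ∑ k, p k * Real.exp (-(if k ∈ S then (1:ℝ) else 0)) ≤
        ∑ k, (p k - if k ∈ S then p k / 2 else 0) := by
      apply Finset.sum_le_sum
      intro k _
      split_ifs
      · nlinarith [hp0 k]
      · simp
    refine this.trans ?_
    rw [Finset.sum_sub_distrib, hp1, Finset.sum_ite_mem, Finset.univ_inter, ← Finset.sum_div]
    have := Real.add_one_le_exp (-(1/2 * ∑ j ∈ S, p j))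
    linarith
  have h3 : 0 ≤ ∑ k, p k * Real.exp (-(if k ∈ S then (1:ℝ) else 0)) :=
    Finset.sum_nonneg fun k _ => mul_nonneg (hp0 k) (Real.exp_pos _).le
  calc _ ≤ Real.exp (∑ j ∈ S, n * p j / 4) * (Real.exp (-(1/2 * ∑ j ∈ S, p j)))^n := by
        gcongr
    _ = _ := by
        rw [← Real.exp_nat_mul, ← Real.exp_add]
        congr 1
        rw [Finset.sum_neg_distrib, ← Finset.sum_div, ← Finset.mul_sum]
        ring

lemma mgf_bound {n d : ℕ} (p : Fin d → ℝ) (hp0 : ∀ j, 0 ≤ p j) (hp1 : ∑ j, p j = 1)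
    (B : Finset (Fin d)) (b : Fin d → ℝ) (hb : ∀ j, 0 ≤ b j) :
    ∑ x : Fin n → Fin d, (∏ i, p (x i)) * ∏ j ∈ B, (1 + b j * lowInd p x j)
      ≤ ∏ j ∈ B, (1 + b j * Real.exp (-(n * p j / 4))) := by
  simp_rw [Finset.prod_one_add, Finset.mul_sum]
  rw [Finset.sum_comm]
  apply Finset.sum_le_sum
  intro S _
  simp_rw [Finset.prod_mul_distrib]
  calc _ = (∏ j ∈ S, b j) * ∑ x : Fin n → Fin d, (∏ i, p (x i)) * ∏ j ∈ S, lowInd p x j := by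
        rw [Finset.mul_sum]
        apply Finset.sum_congr rfl
        intros; ring
    _ ≤ _ := mul_le_mul_of_nonneg_left (subset_bound p hp0 hp1 S)
        (Finset.prod_nonneg fun j _ => hb j)

lemma core {n d : ℕ} (hd : 2 ≤ d)
    (p : Fin d → ℝ) (hp0 : ∀ j, 0 ≤ p j) (hp1 : ∑ j, p j = 1) (L : ℝ) (hL : 0 < L)
    (E : Set (Fin n → Fin d))
    (hE : ∀ x ∈ E, 160 * d + 64 * L ^ 2 ≤ ∑ j, (n * p j) ^ 2 * lowInd p x j) :
    sampleProb p E ≤ 2 * Real.exp (-L) := by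
  have hdR : (2:ℝ) ≤ d := by exact_mod_cast hd
  have hlog : 0 < Real.log d := Real.log_pos (by linarith)
  obtain ⟨M, hM⟩ : ∃ M, M = 4 * (L + Real.log d) := ⟨_, rfl⟩
  have hM0 : 0 < M := by rw [hM]; positivity
  obtain ⟨θ, hθ⟩ : ∃ θ, θ = 1 / (8 * M) := ⟨_, rfl⟩
  have hθ0 : 0 < θ := by rw [hθ]; positivity
  have hθM : θ * M = 1/8 := by rw [hθ]; field_simp
  let B : Finset (Fin d) := univ.filter fun j => n * p j ≤ M
  have ha0 : ∀ j, 0 ≤ n * p j := fun j => mul_nonneg (Nat.cast_nonneg _) (hp0 j)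
  let b : Fin d → ℝ := fun j => Real.exp (θ * (n * p j)^2) - 1
  have hb : ∀ j, 0 ≤ b j := fun j => sub_nonneg.2 (Real.one_le_exp (by positivity))
  have hw : ∀ x : Fin n → Fin d, 0 ≤ ∏ i, p (x i) :=
    fun x => Finset.prod_nonneg fun i _ => hp0 _
  -- the threshold
  have hT : 128 * d + L / θ ≤ 160 * d + 64 * L^2 := by
    have h1 : L / θ = 32 * (L^2 + L * Real.log d) := by
      rw [hθ, hM]; field_simp; ring
    have h2 : Real.log d ≤ 2 * Real.sqrt d := by
      have := Real.log_le_self (Real.sqrt_nonneg d)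
      rw [Real.log_sqrt (by linarith)] at this
      linarith
    have h3 := Real.sq_sqrt (show (0:ℝ) ≤ d by linarith)
    rw [h1]
    nlinarith [sq_nonneg (L - Real.sqrt d)]
  have hpoint : ∀ x : Fin n → Fin d, Set.indicator E (fun y => ∏ i, p (y i)) x ≤
      (∑ j ∈ Bᶜ, (∏ i, p (x i)) * ∏ k ∈ {j}, lowInd p x k) +
      Real.exp (-(θ * (128 * d) + L)) * ((∏ i, p (x i)) * ∏ j ∈ B, (1 + b j * lowInd p x j)) := by
    intro x
    have hs1 : 0 ≤ (∑ j ∈ Bᶜ, (∏ i, p (x i)) * ∏ k ∈ {j}, lowInd p x k) :=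
      Finset.sum_nonneg fun j _ => mul_nonneg (hw x)
        (Finset.prod_nonneg fun k _ => lowInd_nonneg p x k)
    have hs2 : 0 ≤ Real.exp (-(θ * (128 * d) + L)) *
        ((∏ i, p (x i)) * ∏ j ∈ B, (1 + b j * lowInd p x j)) :=
      mul_nonneg (Real.exp_pos _).le (mul_nonneg (hw x) (Finset.prod_nonneg fun k _ => by
        have := mul_nonneg (hb k) (lowInd_nonneg p x k)
        linarith))
    by_cases hx : x ∈ E
    swap
    · rw [Set.indicator_of_notMem hx]; linarith
    rw [Set.indicator_of_mem hx]
    by_cases hex : ∃ j ∈ Bᶜ, lowInd p x j = 1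
    · obtain ⟨j, hj, hj1⟩ := hex
      have : (∏ i, p (x i)) * ∏ k ∈ {j}, lowInd p x k ≤
          (∑ j ∈ Bᶜ, (∏ i, p (x i)) * ∏ k ∈ {j}, lowInd p x k) :=
        Finset.single_le_sum (f := fun j => (∏ i, p (x i)) * ∏ k ∈ {j}, lowInd p x k)
          (fun j _ => mul_nonneg (hw x)
            (Finset.prod_nonneg fun k _ => lowInd_nonneg p x k)) hj
      rw [Finset.prod_singleton, hj1, mul_one] at this
      linarith
    · push Not at hex
      have hz : ∀ j ∈ Bᶜ, lowInd p x j = 0 := by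
        intro j hj
        have := hex j hj
        unfold lowInd at *
        split_ifs at * <;> simp_all
      have hsum : ∑ j, (n * p j) ^ 2 * lowInd p x j = ∑ j ∈ B, (n * p j) ^ 2 * lowInd p x j := by
        rw [← Finset.sum_add_sum_compl B]
        rw [Finset.sum_eq_zero (s := Bᶜ) (fun j hj => by rw [hz j hj, mul_zero]), add_zero]
      have hprod : ∏ j ∈ B, (1 + b j * lowInd p x j) =
          Real.exp (θ * ∑ j ∈ B, (n * p j) ^ 2 * lowInd p x j) := by
        rw [Finset.mul_sum, Real.exp_sum]
        apply Finset.prod_congr rfl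
        intro j _
        simp only [b]
        unfold lowInd
        split_ifs <;> simp
      have h1 := hE x hx
      rw [hsum] at h1
      have h2 : θ * (128 * d) + L ≤ θ * ∑ j ∈ B, (n * p j) ^ 2 * lowInd p x j := by
        calc θ * (128 * d) + L = θ * (128 * d + L / θ) := by field_simp
          _ ≤ _ := mul_le_mul_of_nonneg_left (hT.trans h1) hθ0.le
      have h3 : 1 ≤ Real.exp (-(θ * (128 * d) + L)) * ∏ j ∈ B, (1 + b j * lowInd p x j) := by
        rw [hprod, ← Real.exp_add]
        exact Real.one_le_exp (by linarith)
      nlinarith [hw x]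
  have hbig : ∑ j ∈ Bᶜ, ∑ x : Fin n → Fin d, (∏ i, p (x i)) * ∏ k ∈ {j}, lowInd p x k
      ≤ Real.exp (-L) := by
    calc _ ≤ ∑ j ∈ Bᶜ, Real.exp (-(L + Real.log d)) := by
          apply Finset.sum_le_sum
          intro j hj
          refine (subset_bound p hp0 hp1 {j}).trans ?_
          rw [Finset.prod_singleton]
          apply Real.exp_le_exp.2
          simp [B] at hj
          linarith
      _ ≤ ∑ j : Fin d, Real.exp (-(L + Real.log d)) :=
          Finset.sum_le_sum_of_subset_of_nonneg (Finset.subset_univ _)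
            (fun _ _ _ => (Real.exp_pos _).le)
      _ = _ := by
          rw [Finset.sum_const, Finset.card_univ, Fintype.card_fin, nsmul_eq_mul, neg_add,
            Real.exp_add, Real.exp_neg (Real.log d), Real.exp_log (by linarith)]
          field_simp
  have hsmall : ∑ x : Fin n → Fin d, (∏ i, p (x i)) * ∏ j ∈ B, (1 + b j * lowInd p x j)
      ≤ Real.exp (θ * (128 * d)) := by
    refine (mgf_bound p hp0 hp1 B b hb).trans ?_
    calc _ ≤ ∏ j ∈ B, Real.exp (θ * 128) := by
          apply Finset.prod_le_prod
          · intro j _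
            have := mul_nonneg (hb j) (Real.exp_pos (-(n * p j / 4))).le
            linarith
          · intro j hj
            have hjM : n * p j ≤ M := by simpa [B] using hj
            have key : b j * Real.exp (-(n * p j / 4)) ≤ θ * 128 := by
              simp only [b]
              have haj := ha0 j
              generalize (n:ℝ) * p j = a at hjM haj ⊢
              have hu : θ * a ^ 2 ≤ a / 8 := by
                have : θ * a ≤ 1 / 8 := by
                  rw [← hθM]; exact mul_le_mul_of_nonneg_left hjM hθ0.le
                nlinarith
              have hu0 : 0 ≤ θ * a ^ 2 := by positivity
              have e1 : Real.exp (θ * a ^ 2) - 1 ≤ θ * a ^ 2 * Real.exp (θ * a ^ 2) := by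
                have h := Real.add_one_le_exp (-(θ * a ^ 2))
                have h' : Real.exp (-(θ * a ^ 2)) * Real.exp (θ * a ^ 2) = 1 := by
                  rw [← Real.exp_add]; simp
                nlinarith [Real.exp_pos (θ * a ^ 2)]
              have e2 : Real.exp (θ * a ^ 2) ≤ Real.exp (a / 8) := Real.exp_le_exp.2 hu
              have e3 : Real.exp (-(a / 4)) = Real.exp (-(a / 8)) * Real.exp (-(a / 8)) := by
                rw [← Real.exp_add]; congr 1; ring
              have e4 : Real.exp (a / 8) * Real.exp (-(a / 8)) = 1 := by
                rw [← Real.exp_add]; simp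
              have e5 : a ^ 2 ≤ 128 * Real.exp (a / 8) := by
                have := Real.quadratic_le_exp_of_nonneg (show 0 ≤ a / 8 by linarith)
                nlinarith
              have e6 : a ^ 2 * Real.exp (-(a / 8)) ≤ 128 := by
                have := mul_le_mul_of_nonneg_right e5 (Real.exp_pos (-(a / 8))).le
                rw [mul_assoc, e4] at this
                linarith
              calc (Real.exp (θ * a ^ 2) - 1) * Real.exp (-(a / 4))
                  ≤ (θ * a ^ 2 * Real.exp (a / 8)) * Real.exp (-(a / 4)) := by
                    apply mul_le_mul_of_nonneg_right _ (Real.exp_pos _).le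
                    exact e1.trans (mul_le_mul_of_nonneg_left e2 hu0)
                _ = θ * (a ^ 2 * Real.exp (-(a / 8))) *
                      (Real.exp (a / 8) * Real.exp (-(a / 8))) := by rw [e3]; ring
                _ ≤ θ * 128 := by
                    rw [e4, mul_one]; exact mul_le_mul_of_nonneg_left e6 hθ0.le
            have := Real.add_one_le_exp (θ * 128)
            linarith
      _ ≤ _ := by
          rw [← Real.exp_sum, Finset.sum_const, nsmul_eq_mul]
          apply Real.exp_le_exp.2
          have hc : (B.card : ℝ) ≤ d := by
            have := Finset.card_le_univ B
            rw [Fintype.card_fin] at this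
            exact_mod_cast this
          nlinarith
  unfold sampleProb
  refine (Finset.sum_le_sum fun x _ => hpoint x).trans ?_
  rw [Finset.sum_add_distrib, Finset.sum_comm, ← Finset.mul_sum]
  have : Real.exp (-(θ * (128 * d) + L)) *
      ∑ x : Fin n → Fin d, (∏ i, p (x i)) * ∏ j ∈ B, (1 + b j * lowInd p x j) ≤ Real.exp (-L) := by
    calc _ ≤ Real.exp (-(θ * (128 * d) + L)) * Real.exp (θ * (128 * d)) := by gcongr
      _ = _ := by rw [← Real.exp_add]; congr 1; ring
  linarith

theorem tail_residual (n d : ℕ) (hn : 1 ≤ n) (hd : 2 ≤ d)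
    (p : Fin d → ℝ) (hp0 : ∀ j, 0 ≤ p j) (hp1 : ∑ j, p j = 1) :
    (∀ δ : ℝ, Real.exp (-(n : ℝ) / 6) < δ → δ < Real.exp (-2) →
      sampleProb p {x : Fin n → Fin d |
        (33550 * d + 33550 * Real.log (1 / δ) ^ 2) / n ≤ residualTerm p 1 x} ≤ 2 * δ) ∧
    (∀ δ : ℝ, Real.exp (-(n : ℝ) / 6) < δ → δ ≤ Real.exp (-Real.sqrt d) →
      sampleProb p {x : Fin n → Fin d |
        91190 * Real.sqrt d * Real.log (1 / δ) / n ≤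
          residualTerm p (Real.log (1 / δ) / Real.sqrt d) x} ≤ 2 * δ) := by
  have hn0 : (0:ℝ) < n := by exact_mod_cast hn
  have hdR : (2:ℝ) ≤ d := by exact_mod_cast hd
  have hs : 0 < Real.sqrt d := Real.sqrt_pos.2 (by linarith)
  have hss := Real.sq_sqrt (show (0:ℝ) ≤ d by linarith)
  have hres : ∀ (lam : ℝ) (x : Fin n → Fin d), residualTerm p lam x =
      2 / (n * lam) * ∑ j, (n * p j) ^ 2 * lowInd p x j := by
    intro lam x
    unfold residualTerm
    rw [Finset.mul_sum]
    apply Finset.sum_congr rfl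
    intro j _
    change _ * lowInd p x j = _
    rw [← mul_assoc]
    congr 1
    field_simp
  constructor
  · intro δ h1 h2
    have hδ : 0 < δ := (Real.exp_pos _).trans h1
    have hlog : Real.log (1/δ) = - Real.log δ := by rw [one_div, Real.log_inv]
    have hL : 2 < Real.log (1/δ) := by
      have := (Real.log_lt_iff_lt_exp hδ).2 h2
      linarith
    have hexp : δ = Real.exp (-Real.log (1/δ)) := by rw [hlog, neg_neg, Real.exp_log hδ]
    conv_rhs => rw [hexp]
    apply core hd p hp0 hp1 _ (by linarith)
    intro x hx
    rw [Set.mem_ofPred_eq, hres] at hx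
    generalize Real.log (1/δ) = L at *
    rw [div_le_iff₀ hn0] at hx
    have : 2 / (n * 1) * (∑ j, (n * p j) ^ 2 * lowInd p x j) * n =
      2 * ∑ j, (n * p j) ^ 2 * lowInd p x j := by field_simp
    rw [this] at hx
    nlinarith
  · intro δ h1 h2
    have hδ : 0 < δ := (Real.exp_pos _).trans h1
    have hlog : Real.log (1/δ) = - Real.log δ := by rw [one_div, Real.log_inv]
    have hL : Real.sqrt d ≤ Real.log (1/δ) := by
      have := (Real.log_le_iff_le_exp hδ).2 h2
      linarith
    have hexp : δ = Real.exp (-Real.log (1/δ)) := by rw [hlog, neg_neg, Real.exp_log hδ]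
    conv_rhs => rw [hexp]
    apply core hd p hp0 hp1 _ (by linarith)
    intro x hx
    rw [Set.mem_ofPred_eq, hres] at hx
    generalize Real.log (1/δ) = L at *
    have hL0 : 0 < L := by linarith
    rw [div_le_iff₀ hn0] at hx
    have : 2 / (n * (L / Real.sqrt d)) * (∑ j, (n * p j) ^ 2 * lowInd p x j) * n =
      Real.sqrt d * (2 * (∑ j, (n * p j) ^ 2 * lowInd p x j) / L) := by field_simp
    rw [this, mul_right_comm, mul_comm] at hx
    have hx := le_of_mul_le_mul_left hx hs
    rw [le_div_iff₀ hL0] at hx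
    nlinarith
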